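/- (Fefferman–Stein vector-valued maximal inequality) Let (f_j)_{j∈ℤ} be a sequence of measurable functions on ℝⁿ, 1 < p < ∞ and 1 < q ≤ ∞. Then ‖ ‖(Mf_j)_j‖_{ℓ^q} ‖_{L^p} ≤ C_n μ(p) μ(q) ‖ ‖(f_j)_j‖_{ℓ^q} ‖_{L^p}, where μ(r) = max{r, (r−1)^{−1}}. -/

import Mathlib

open MeasureTheory

noncomputable section

variable {n : ℕ}

/-- The centered Hardy–Littlewood maximal function. -/
def HLmax (f : EuclideanSpace ℝ (Fin n) → ℂ) (x : EuclideanSpace ℝ (Fin n)) : ENNReal :=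
  ⨆ r : {r : ℝ // 0 < r},
    (volume (Metric.ball (0 : EuclideanSpace ℝ (Fin n)) r))⁻¹ *
      ∫⁻ y in Metric.ball (0 : EuclideanSpace ℝ (Fin n)) (r : ℝ), ‖f (x + y)‖₊

/-- The `ℓ^q` norm (with `q` possibly `∞`) of a `ℤ`-indexed family in `[0,∞]`. -/
def elq (q : ENNReal) (a : ℤ → ENNReal) : ENNReal :=
  if q = ⊤ then ⨆ j, a j else (∑' j, (a j) ^ q.toReal) ^ (1 / q.toReal)

/-- Maximal function of a nonnegative function. -/
def MM (f : EuclideanSpace ℝ (Fin n) → ENNReal) (x : EuclideanSpace ℝ (Fin n)) : ENNReal :=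
  ⨆ r : {r : ℝ // 0 < r},
    (volume (Metric.ball (0 : EuclideanSpace ℝ (Fin n)) r))⁻¹ *
      ∫⁻ y in Metric.ball x (r : ℝ), f y

lemma vb_pos {r : ℝ} (hr : 0 < r) :
    volume (Metric.ball (0 : EuclideanSpace ℝ (Fin n)) r) ≠ 0 :=
  (Metric.measure_ball_pos volume _ hr).ne'

lemma vb_top {r : ℝ} :
    volume (Metric.ball (0 : EuclideanSpace ℝ (Fin n)) r) ≠ ⊤ :=
  measure_ball_lt_top.ne

lemma HLmax_eq (f : EuclideanSpace ℝ (Fin n) → ℂ) (x : EuclideanSpace ℝ (Fin n)) :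
    HLmax f x = MM (fun y => (‖f y‖₊ : ENNReal)) x := by
  unfold HLmax MM
  congr 1
  ext r
  congr 1
  rw [← lintegral_indicator Metric.isOpen_ball.measurableSet,
    ← lintegral_indicator Metric.isOpen_ball.measurableSet,
    ← lintegral_add_left_eq_self ((Metric.ball x (r : ℝ)).indicator _) x]
  congr 1
  ext y
  simp only [Set.indicator, Metric.mem_ball, dist_self_add_left, dist_zero_right]

lemma setLIntegral_le_MM (f : EuclideanSpace ℝ (Fin n) → ENNReal)
    (x : EuclideanSpace ℝ (Fin n)) {r : ℝ} (hr : 0 < r) :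
    ∫⁻ y in Metric.ball x r, f y ≤
      volume (Metric.ball (0 : EuclideanSpace ℝ (Fin n)) r) * MM f x := by
  have h := le_iSup (fun r : {r : ℝ // 0 < r} =>
    (volume (Metric.ball (0 : EuclideanSpace ℝ (Fin n)) r))⁻¹ *
      ∫⁻ y in Metric.ball x (r : ℝ), f y) ⟨r, hr⟩
  rw [← ENNReal.inv_mul_le_iff (vb_pos hr) vb_top]
  exact h

lemma lt_MM_iff (f : EuclideanSpace ℝ (Fin n) → ENNReal)
    (x : EuclideanSpace ℝ (Fin n)) (l : ENNReal) :
    l < MM f x ↔ ∃ r : ℝ, 0 < r ∧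
      l * volume (Metric.ball (0 : EuclideanSpace ℝ (Fin n)) r) < ∫⁻ y in Metric.ball x r, f y := by
  unfold MM
  rw [lt_iSup_iff]
  simp only [Subtype.exists, exists_prop]
  refine exists_congr fun r => and_congr_right fun hr => ?_
  rw [mul_comm _ (∫⁻ y in Metric.ball x r, f y), ← div_eq_mul_inv,
    ENNReal.lt_div_iff_mul_lt (Or.inl (vb_pos hr)) (Or.inl vb_top)]

lemma isOpen_lt_MM (f : EuclideanSpace ℝ (Fin n) → ENNReal) (l : ENNReal) :
    IsOpen {x | l < MM f x} := by
  rw [Metric.isOpen_iff]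
  intro x hx
  obtain ⟨r, hr, h⟩ := (lt_MM_iff f x l).1 hx
  have hU : Metric.ball x r = ⋃ k : ℕ, Metric.ball x (r - 1 / ((k : ℝ) + 1)) := by
    ext y
    simp only [Metric.mem_ball, Set.mem_iUnion]
    constructor
    · intro hy
      obtain ⟨k, hk⟩ := exists_nat_one_div_lt (sub_pos.2 hy)
      exact ⟨k, by linarith⟩
    · rintro ⟨k, hk⟩
      have : 0 < 1 / ((k : ℝ) + 1) := by positivity
      linarith
  have hmono : Monotone fun k : ℕ => Metric.ball x (r - 1 / ((k : ℝ) + 1)) := by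
    intro a b hab
    apply Metric.ball_subset_ball
    have := one_div_le_one_div_of_le (by positivity : (0 : ℝ) < (a : ℝ) + 1)
      (by have : (a : ℝ) ≤ b := by exact_mod_cast hab
          linarith : (a : ℝ) + 1 ≤ (b : ℝ) + 1)
    linarith
  have e : ∫⁻ y in Metric.ball x r, f y =
      ⨆ k : ℕ, ∫⁻ y in Metric.ball x (r - 1 / ((k : ℝ) + 1)), f y := by
    rw [← withDensity_apply f Metric.isOpen_ball.measurableSet, hU, hmono.measure_iUnion]
    simp only [withDensity_apply f Metric.isOpen_ball.measurableSet]
  rw [e, lt_iSup_iff] at h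
  obtain ⟨k, hk⟩ := h
  refine ⟨1 / ((k : ℝ) + 1), by positivity, fun y hy => ?_⟩
  refine (lt_MM_iff f y l).2 ⟨r, hr, hk.trans_le ?_⟩
  refine lintegral_mono_set (Metric.ball_subset_ball' ?_)
  rw [Metric.mem_ball, dist_comm] at hy
  linarith

lemma measurable_MM (f : EuclideanSpace ℝ (Fin n) → ENNReal) : Measurable (MM f) :=
  measurable_of_Ioi fun l => (isOpen_lt_MM f l).measurableSet

lemma MM_mono_ae {f g : EuclideanSpace ℝ (Fin n) → ENNReal} (h : ∀ᵐ x, f x ≤ g x)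
    (x : EuclideanSpace ℝ (Fin n)) : MM f x ≤ MM g x := by
  unfold MM
  exact iSup_mono fun r => mul_le_mul_right (lintegral_mono_ae (ae_restrict_of_ae h)) _

lemma MM_one (x : EuclideanSpace ℝ (Fin n)) : MM (fun _ => 1) x ≤ 1 := by
  unfold MM
  refine iSup_le fun r => ?_
  rw [lintegral_one, Measure.restrict_apply_univ, Measure.addHaar_ball_center volume x]
  exact ENNReal.inv_mul_le_one _

/-- Pointwise multiplicative Hölder for the maximal function. -/
lemma MM_holder {f g h : EuclideanSpace ℝ (Fin n) → ENNReal} (hg : Measurable g)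
    (hh : Measurable h) {a b : ℝ} (ha : 0 ≤ a) (hb : 0 ≤ b) (hab : a + b = 1)
    (H : ∀ᵐ x, f x ≤ g x ^ a * h x ^ b) (x : EuclideanSpace ℝ (Fin n)) :
    MM f x ≤ MM g x ^ a * MM h x ^ b := by
  refine (MM_mono_ae H x).trans ?_
  conv_lhs => unfold MM
  refine iSup_le fun ⟨r, hr⟩ => ?_
  rw [ENNReal.inv_mul_le_iff (vb_pos hr) vb_top]
  refine (ENNReal.lintegral_mul_norm_pow_le hg.aemeasurable hh.aemeasurable ha hb hab).trans ?_
  refine (mul_le_mul' (ENNReal.rpow_le_rpow (setLIntegral_le_MM g x hr) ha)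
    (ENNReal.rpow_le_rpow (setLIntegral_le_MM h x hr) hb)).trans (le_of_eq ?_)
  rw [ENNReal.mul_rpow_of_nonneg _ _ ha, ENNReal.mul_rpow_of_nonneg _ _ hb]
  have : volume (Metric.ball (0 : EuclideanSpace ℝ (Fin n)) r) =
      volume (Metric.ball (0 : EuclideanSpace ℝ (Fin n)) r) ^ a *
      volume (Metric.ball (0 : EuclideanSpace ℝ (Fin n)) r) ^ b := by
    rw [← ENNReal.rpow_add_of_nonneg _ _ ha hb, hab, ENNReal.rpow_one]
  conv_rhs => rw [this]
  ring

lemma ball_term {f w : EuclideanSpace ℝ (Fin n) → ENNReal} (hf : Measurable f) {l : ENNReal}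
    {b : EuclideanSpace ℝ (Fin n)} {r : ℝ} (hr : 0 < r)
    (h : l * volume (Metric.ball (0 : EuclideanSpace ℝ (Fin n)) r) < ∫⁻ y in Metric.ball b r, f y) :
    l * (∫⁻ y in Metric.closedBall b (4 * r), w y) ≤
      6 ^ n * ∫⁻ y in Metric.ball b r, f y * MM w y := by
  set m := ∫⁻ y in Metric.closedBall b (4 * r), w y with hm
  set v := volume (Metric.ball (0 : EuclideanSpace ℝ (Fin n)) r) with hv
  have hv0 : v ≠ 0 := vb_pos hr
  have hvt : v ≠ ⊤ := vb_top
  have key : ∀ y ∈ Metric.ball b r, m ≤ 6 ^ n * v * MM w y := by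
    intro y hy
    have h1 : m ≤ ∫⁻ z in Metric.ball y (6 * r), w z := by
      refine lintegral_mono_set ?_
      apply Metric.closedBall_subset_ball'
      rw [Metric.mem_ball, dist_comm] at hy
      linarith
    refine h1.trans ((setLIntegral_le_MM w y (by positivity)).trans (le_of_eq ?_))
    rw [Measure.addHaar_ball_mul_of_pos volume _ (by norm_num : (0 : ℝ) < 6)]
    congr 2
    simp [ENNReal.ofReal_pow]
  have h2 : (l * m) * v ≤ (6 ^ n * ∫⁻ y in Metric.ball b r, f y * MM w y) * v := by
    calc (l * m) * v = (l * v) * m := by ring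
      _ ≤ (∫⁻ y in Metric.ball b r, f y) * m := by gcongr
      _ = ∫⁻ y in Metric.ball b r, f y * m := (lintegral_mul_const _ hf).symm
      _ ≤ ∫⁻ y in Metric.ball b r, (6 ^ n * v) * (f y * MM w y) := by
        refine setLIntegral_mono' Metric.isOpen_ball.measurableSet fun y hy => ?_
        calc f y * m ≤ f y * (6 ^ n * v * MM w y) := by gcongr; exact key y hy
          _ = _ := by ring
      _ = (6 ^ n * v) * ∫⁻ y in Metric.ball b r, (f y * MM w y) :=
        lintegral_const_mul _ (hf.mul (measurable_MM w))
      _ = _ := by ring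
  exact (ENNReal.mul_le_mul_iff_left hv0 hvt).1 h2

lemma weak_type {f w : EuclideanSpace ℝ (Fin n) → ENNReal} (hf : Measurable f) (l : ENNReal) :
    l * (∫⁻ x in {x | l < MM f x}, w x) ≤ 6 ^ n * ∫⁻ x, f x * MM w x := by
  set ν := volume.withDensity w with hν
  let S : ℕ → Set (EuclideanSpace ℝ (Fin n)) := fun R => {x | ∃ r : ℝ, 0 < r ∧ r ≤ R ∧
      l * volume (Metric.ball (0 : EuclideanSpace ℝ (Fin n)) r) < ∫⁻ y in Metric.ball x r, f y}
  have hS : Monotone S := by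
    rintro a b hab x ⟨r, h1, h2, h3⟩
    exact ⟨r, h1, h2.trans (by exact_mod_cast hab), h3⟩
  have hU : {x | l < MM f x} = ⋃ R, S R := by
    ext x
    simp only [Set.mem_ofPred_eq, Set.mem_iUnion, S]
    rw [lt_MM_iff]
    constructor
    · rintro ⟨r, h1, h2⟩
      obtain ⟨k, hk⟩ := exists_nat_ge r
      exact ⟨k, r, h1, hk, h2⟩
    · rintro ⟨k, r, h1, hk, h2⟩
      exact ⟨r, h1, h2⟩
  rw [← withDensity_apply w (isOpen_lt_MM f l).measurableSet, hU, hS.measure_iUnion,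
    ENNReal.mul_iSup]
  refine iSup_le fun R => ?_
  have hex : ∀ x : EuclideanSpace ℝ (Fin n), ∃ r : ℝ, x ∈ S R → (0 < r ∧ r ≤ R ∧
      l * volume (Metric.ball (0 : EuclideanSpace ℝ (Fin n)) r) <
        ∫⁻ y in Metric.ball x r, f y) := by
    intro x
    by_cases hx : x ∈ S R
    · obtain ⟨r, hr⟩ := hx
      exact ⟨r, fun _ => hr⟩
    · exact ⟨0, fun h => absurd h hx⟩
  choose r hr using hex
  obtain ⟨u, hut, hdisj, hcov⟩ :=
    Vitali.exists_disjoint_subfamily_covering_enlargement_closedBall (S R) id r R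
      (fun a ha => (hr a ha).2.1) 4 (by norm_num)
  have hd2 : u.PairwiseDisjoint fun a => Metric.ball a (r a) := by
    intro a ha b hb hab
    exact (hdisj ha hb hab).mono Metric.ball_subset_closedBall Metric.ball_subset_closedBall
  have hcount : u.Countable := hd2.countable_of_isOpen (fun _ _ => Metric.isOpen_ball)
    (fun a ha => ⟨a, Metric.mem_ball_self (hr a (hut ha)).1⟩)
  have : Countable u := hcount.to_subtype
  have hsub : S R ⊆ ⋃ b : u, Metric.closedBall (b : EuclideanSpace ℝ (Fin n)) (4 * r b) := by
    intro x hx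
    obtain ⟨b, hb, hxb⟩ := hcov x hx
    exact Set.mem_iUnion.2 ⟨⟨b, hb⟩, hxb (Metric.mem_closedBall_self (hr x hx).1.le)⟩
  calc l * ν (S R) ≤ l * ∑' b : u, ν (Metric.closedBall (b : EuclideanSpace ℝ (Fin n)) (4 * r b)) := by
        gcongr
        exact (measure_mono hsub).trans (measure_iUnion_le _)
    _ = ∑' b : u, l * ν (Metric.closedBall (b : EuclideanSpace ℝ (Fin n)) (4 * r b)) :=
        ENNReal.tsum_mul_left.symm
    _ ≤ ∑' b : u, 6 ^ n * ∫⁻ y in Metric.ball (b : EuclideanSpace ℝ (Fin n)) (r b), f y * MM w y := by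
        refine ENNReal.tsum_le_tsum fun b => ?_
        rw [withDensity_apply w Metric.isClosed_closedBall.measurableSet]
        exact ball_term hf (hr b (hut b.2)).1 (hr b (hut b.2)).2.2
    _ = 6 ^ n * ∑' b : u, ∫⁻ y in Metric.ball (b : EuclideanSpace ℝ (Fin n)) (r b), f y * MM w y :=
        ENNReal.tsum_mul_left
    _ = 6 ^ n * ∫⁻ y in ⋃ b : u, Metric.ball (b : EuclideanSpace ℝ (Fin n)) (r b), f y * MM w y := by
        rw [lintegral_iUnion (fun _ => Metric.isOpen_ball.measurableSet)]
        intro a b hab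
        exact hd2 a.2 b.2 (fun h => hab (Subtype.ext h))
    _ ≤ 6 ^ n * ∫⁻ x, f x * MM w x := by
        exact mul_le_mul_right (setLIntegral_le_lintegral _ _) _

lemma layer_fin {s : ℝ} (hs : 0 < s) {b : ℝ} (hb : 0 ≤ b) :
    ∫⁻ t in Set.Ioi (0 : ℝ), (if ENNReal.ofReal t < ENNReal.ofReal b then
      ENNReal.ofReal (t ^ (s - 1)) else 0) = ENNReal.ofReal b ^ s / ENNReal.ofReal s := by
  have h1 : ∫⁻ t in Set.Ioi (0 : ℝ), (if ENNReal.ofReal t < ENNReal.ofReal b then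
      ENNReal.ofReal (t ^ (s - 1)) else 0) =
      ∫⁻ t in Set.Ioc (0 : ℝ) b, ENNReal.ofReal (t ^ (s - 1)) := by
    rw [← restrict_Ioo_eq_restrict_Ioc, ← lintegral_indicator measurableSet_Ioi,
      ← lintegral_indicator measurableSet_Ioo]
    congr 1
    ext t
    by_cases ht : 0 < t
    · have : ENNReal.ofReal t < ENNReal.ofReal b ↔ t < b :=
        ENNReal.ofReal_lt_ofReal_iff_of_nonneg ht.le
      simp [Set.indicator, ht, this]
    · simp [Set.indicator, ht]
  have hint : IntegrableOn (fun t : ℝ => t ^ (s - 1)) (Set.Ioc 0 b) := by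
    have := intervalIntegral.intervalIntegrable_rpow' (a := 0) (b := b) (r := s - 1) (by linarith)
    rwa [intervalIntegrable_iff_integrableOn_Ioc_of_le hb] at this
  rw [h1, ← ofReal_integral_eq_lintegral_ofReal hint]
  · rw [← intervalIntegral.integral_of_le hb, integral_rpow (Or.inl (by linarith)),
      ENNReal.ofReal_rpow_of_nonneg hb hs.le, ← ENNReal.ofReal_div_of_pos hs]
    congr 1
    rw [show s - 1 + 1 = s by ring, Real.zero_rpow hs.ne', sub_zero]
  · refine (ae_restrict_iff' measurableSet_Ioc).2 (Filter.Eventually.of_forall fun t ht => ?_)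
    exact Real.rpow_nonneg ht.1.le _

lemma layer {s : ℝ} (hs : 0 < s) (a : ENNReal) :
    ∫⁻ t in Set.Ioi (0 : ℝ), (if ENNReal.ofReal t < a then
      ENNReal.ofReal (t ^ (s - 1)) else 0) = a ^ s / ENNReal.ofReal s := by
  by_cases ha : a = ⊤
  · subst ha
    rw [ENNReal.top_rpow_of_pos hs, ENNReal.top_div_of_ne_top ENNReal.ofReal_ne_top]
    refine ENNReal.eq_top_of_forall_nnreal_le fun c => ?_
    have hc : (0 : ℝ) ≤ (c * s) ^ (1 / s) := by positivity
    have := layer_fin hs hc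
    have h2 : ENNReal.ofReal ((c * s) ^ (1 / s)) ^ s / ENNReal.ofReal s = c := by
      rw [ENNReal.ofReal_rpow_of_nonneg hc hs.le, ← ENNReal.ofReal_div_of_pos hs,
        ← Real.rpow_mul (by positivity), one_div_mul_cancel hs.ne', Real.rpow_one,
        mul_div_cancel_right₀ _ hs.ne', ENNReal.ofReal_coe_nnreal]
    rw [← h2, ← this]
    refine lintegral_mono fun t => ?_
    simp only [ENNReal.ofReal_lt_top, if_true]
    split_ifs <;> simp
  · have := layer_fin hs (ENNReal.toReal_nonneg (a := a))
    rwa [ENNReal.ofReal_toReal ha] at this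

lemma MM_add_const {f g : EuclideanSpace ℝ (Fin n) → ENNReal} {c : ENNReal}
    (h : ∀ x, f x ≤ g x + c) (x : EuclideanSpace ℝ (Fin n)) : MM f x ≤ MM g x + c := by
  conv_lhs => unfold MM
  refine iSup_le fun ⟨r, hr⟩ => ?_
  rw [ENNReal.inv_mul_le_iff (vb_pos hr) vb_top]
  calc ∫⁻ y in Metric.ball x r, f y ≤ ∫⁻ y in Metric.ball x r, (g y + c) :=
        lintegral_mono fun y => h y
    _ = (∫⁻ y in Metric.ball x r, g y) + c * volume (Metric.ball x r) := by
        rw [lintegral_add_right _ measurable_const, setLIntegral_const]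
    _ ≤ _ := by
        rw [Measure.addHaar_ball_center volume x, mul_add, mul_comm c]
        gcongr
        exact setLIntegral_le_MM g x hr

lemma weak_trunc {f w : EuclideanSpace ℝ (Fin n) → ENNReal} (hf : Measurable f)
    {t : ℝ} (ht : 0 < t) :
    ∫⁻ x in {x | ENNReal.ofReal t < MM f x}, w x ≤
      2 * 6 ^ n * ENNReal.ofReal t⁻¹ *
        ∫⁻ x, (if ENNReal.ofReal t < 2 * f x then f x * MM w x else 0) := by
  set f1 : EuclideanSpace ℝ (Fin n) → ENNReal :=
    fun x => if ENNReal.ofReal t < 2 * f x then f x else 0 with hf1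
  have hf1m : Measurable f1 :=
    Measurable.ite (measurableSet_lt measurable_const (hf.const_mul 2)) hf measurable_const
  have h2 : ENNReal.ofReal t = ENNReal.ofReal (t / 2) + ENNReal.ofReal (t / 2) := by
    rw [← ENNReal.ofReal_add (by positivity) (by positivity)]
    congr 1
    ring
  have hle : ∀ x, f x ≤ f1 x + ENNReal.ofReal (t / 2) := by
    intro x
    simp only [hf1]
    split_ifs with h
    · exact le_self_add
    · rw [not_lt, h2, ← two_mul] at h
      rw [zero_add]
      exact (ENNReal.mul_le_mul_iff_right (by norm_num) (by norm_num)).1 h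
  have hsub : {x | ENNReal.ofReal t < MM f x} ⊆ {x | ENNReal.ofReal (t / 2) < MM f1 x} := by
    intro x hx
    have h3 : ENNReal.ofReal t < MM f1 x + ENNReal.ofReal (t / 2) :=
      lt_of_lt_of_le hx (MM_add_const hle x)
    rw [h2] at h3
    exact lt_of_add_lt_add_right h3
  have hw := weak_type (w := w) hf1m (ENNReal.ofReal (t / 2))
  have e : (fun x => f1 x * MM w x) =
      fun x => (if ENNReal.ofReal t < 2 * f x then f x * MM w x else 0) := by
    ext x
    simp only [hf1]
    split_ifs <;> simp
  rw [e] at hw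
  have hone : ENNReal.ofReal t⁻¹ * 2 * ENNReal.ofReal (t / 2) = 1 := by
    rw [show (2 : ENNReal) = ENNReal.ofReal 2 by simp, ← ENNReal.ofReal_mul (by positivity),
      ← ENNReal.ofReal_mul (by positivity), ← ENNReal.ofReal_one]
    congr 1
    field_simp
  calc ∫⁻ x in {x | ENNReal.ofReal t < MM f x}, w x
      ≤ ∫⁻ x in {x | ENNReal.ofReal (t / 2) < MM f1 x}, w x := lintegral_mono_set hsub
    _ = ENNReal.ofReal t⁻¹ * 2 * (ENNReal.ofReal (t / 2) *
        ∫⁻ x in {x | ENNReal.ofReal (t / 2) < MM f1 x}, w x) := by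
        rw [← mul_assoc, hone, one_mul]
    _ ≤ ENNReal.ofReal t⁻¹ * 2 * (6 ^ n *
        ∫⁻ x, (if ENNReal.ofReal t < 2 * f x then f x * MM w x else 0)) := by gcongr
    _ = _ := by ring

lemma strong_type {f w : EuclideanSpace ℝ (Fin n) → ENNReal} (hf : Measurable f)
    (hw : Measurable w) {r : ℝ} (hr : 1 < r) :
    ∫⁻ x, MM f x ^ r * w x ≤
      6 ^ n * 2 ^ r * ENNReal.ofReal (r / (r - 1)) * ∫⁻ x, f x ^ r * MM w x := by
  have hr0 : 0 < r := by linarith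
  have hr1 : 0 < r - 1 := by linarith
  have hrne : ENNReal.ofReal r ≠ 0 := by simpa using hr0
  have hr1ne : ENNReal.ofReal (r - 1) ≠ 0 := by simpa using hr
  have hM := measurable_MM f
  have hMw := measurable_MM w
  have m1 : Measurable fun z : EuclideanSpace ℝ (Fin n) × ℝ =>
      (if ENNReal.ofReal z.2 < MM f z.1 then ENNReal.ofReal (z.2 ^ (r - 1)) else 0) * w z.1 := by
    refine (Measurable.ite (measurableSet_lt ?_ ?_) ?_ measurable_const).mul ?_
    · fun_prop
    · exact hM.comp measurable_fst
    · fun_prop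
    · exact hw.comp measurable_fst
  have m2 : Measurable fun z : ℝ × EuclideanSpace ℝ (Fin n) =>
      (if ENNReal.ofReal z.1 < 2 * f z.2 then ENNReal.ofReal (z.1 ^ (r - 1 - 1)) else 0) *
        (f z.2 * MM w z.2) := by
    refine (Measurable.ite (measurableSet_lt ?_ ?_) ?_ measurable_const).mul ?_
    · fun_prop
    · exact (hf.comp measurable_snd).const_mul 2
    · fun_prop
    · exact (hf.comp measurable_snd).mul (hMw.comp measurable_snd)
  have e1 : ∀ x, MM f x ^ r * w x = ENNReal.ofReal r * ∫⁻ t in Set.Ioi (0 : ℝ),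
      (if ENNReal.ofReal t < MM f x then ENNReal.ofReal (t ^ (r - 1)) else 0) * w x := by
    intro x
    rw [lintegral_mul_const, layer hr0, ← mul_assoc, ENNReal.mul_div_cancel hrne
      ENNReal.ofReal_ne_top]
    refine Measurable.ite (measurableSet_lt ?_ ?_) ?_ measurable_const <;> fun_prop
  have e2 : ∀ t ∈ Set.Ioi (0 : ℝ), (∫⁻ x,
      (if ENNReal.ofReal t < MM f x then ENNReal.ofReal (t ^ (r - 1)) else 0) * w x) ≤
      2 * 6 ^ n * ∫⁻ x, (if ENNReal.ofReal t < 2 * f x then ENNReal.ofReal (t ^ (r - 1 - 1)) else 0)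
        * (f x * MM w x) := by
    intro t ht
    have ht : 0 < t := ht
    have e3 : (∫⁻ x,
      (if ENNReal.ofReal t < MM f x then ENNReal.ofReal (t ^ (r - 1)) else 0) * w x) =
      ENNReal.ofReal (t ^ (r - 1)) * ∫⁻ x in {x | ENNReal.ofReal t < MM f x}, w x := by
      rw [← lintegral_indicator (isOpen_lt_MM f _).measurableSet, ← lintegral_const_mul]
      · congr 1
        ext x
        simp only [Set.indicator, Set.mem_ofPred_eq]
        split_ifs <;> simp
      · exact hw.indicator (isOpen_lt_MM f _).measurableSet
    have e4 : (∫⁻ x, (if ENNReal.ofReal t < 2 * f x then ENNReal.ofReal (t ^ (r - 1 - 1)) else 0)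
        * (f x * MM w x)) = ENNReal.ofReal (t ^ (r - 1 - 1)) *
        ∫⁻ x, (if ENNReal.ofReal t < 2 * f x then f x * MM w x else 0) := by
      rw [← lintegral_const_mul]
      · congr 1
        ext x
        split_ifs <;> simp
      · exact Measurable.ite (measurableSet_lt measurable_const (hf.const_mul 2)) (hf.mul hMw)
          measurable_const
    rw [e3, e4]
    refine (mul_le_mul_right (weak_trunc hf ht) _).trans (le_of_eq ?_)
    rw [Real.rpow_sub_one ht.ne' (r - 1), div_eq_mul_inv, ENNReal.ofReal_mul (by positivity)]
    ring
  calc ∫⁻ x, MM f x ^ r * w x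
      = ENNReal.ofReal r * ∫⁻ x, ∫⁻ t in Set.Ioi (0 : ℝ),
        (if ENNReal.ofReal t < MM f x then ENNReal.ofReal (t ^ (r - 1)) else 0) * w x := by
        simp_rw [e1]
        rw [lintegral_const_mul]
        exact m1.lintegral_prod_right
    _ = ENNReal.ofReal r * ∫⁻ t in Set.Ioi (0 : ℝ), ∫⁻ x,
        (if ENNReal.ofReal t < MM f x then ENNReal.ofReal (t ^ (r - 1)) else 0) * w x := by
        rw [lintegral_lintegral_swap m1.aemeasurable]
    _ ≤ ENNReal.ofReal r * ∫⁻ t in Set.Ioi (0 : ℝ), 2 * 6 ^ n * ∫⁻ x,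
        (if ENNReal.ofReal t < 2 * f x then ENNReal.ofReal (t ^ (r - 1 - 1)) else 0)
        * (f x * MM w x) := by
        refine mul_le_mul_right (setLIntegral_mono' measurableSet_Ioi e2) _
    _ = ENNReal.ofReal r * (2 * 6 ^ n * ∫⁻ x, ∫⁻ t in Set.Ioi (0 : ℝ),
        (if ENNReal.ofReal t < 2 * f x then ENNReal.ofReal (t ^ (r - 1 - 1)) else 0)
        * (f x * MM w x)) := by
        rw [lintegral_const_mul, lintegral_lintegral_swap m2.aemeasurable]
        exact m2.lintegral_prod_right
    _ = ENNReal.ofReal r * (2 * 6 ^ n * ∫⁻ x, 2 ^ (r - 1) / ENNReal.ofReal (r - 1) *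
        (f x ^ r * MM w x)) := by
        congr 3
        ext x
        rw [lintegral_mul_const, layer hr1, ENNReal.mul_rpow_of_nonneg _ _ hr1.le]
        · have : f x ^ r = f x ^ (r - 1) * f x := by
            conv_rhs => rw [← ENNReal.rpow_one (f x), ← ENNReal.rpow_mul, one_mul]
            rw [← ENNReal.rpow_add_of_nonneg _ _ hr1.le zero_le_one]
            congr 1
            ring
          rw [this, div_eq_mul_inv, div_eq_mul_inv]
          ring
        · refine Measurable.ite (measurableSet_lt ?_ ?_) ?_ measurable_const <;> fun_prop
    _ = _ := by
        rw [lintegral_const_mul _ (show Measurable fun x => f x ^ r * MM w x from (hf.pow_const r).mul hMw)]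
        have : (2 : ENNReal) ^ r = 2 ^ (r - 1) * 2 := by
          conv_rhs => rw [← ENNReal.rpow_one (2 : ENNReal), ← ENNReal.rpow_mul, one_mul]
          rw [← ENNReal.rpow_add_of_nonneg _ _ hr1.le zero_le_one]
          congr 1
          ring
        rw [this, ENNReal.ofReal_div_of_pos hr1, div_eq_mul_inv, div_eq_mul_inv]
        ring

lemma strong_type_one {f : EuclideanSpace ℝ (Fin n) → ENNReal} (hf : Measurable f)
    {r : ℝ} (hr : 1 < r) :
    ∫⁻ x, MM f x ^ r ≤
      6 ^ n * 2 ^ r * ENNReal.ofReal (r / (r - 1)) * ∫⁻ x, f x ^ r := by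
  have h := strong_type hf (measurable_const (a := (1 : ENNReal))) hr
  simp only [mul_one] at h
  refine h.trans ?_
  gcongr with x
  exact mul_le_of_le_one_right' (MM_one x)

lemma caseA {f : ℤ → EuclideanSpace ℝ (Fin n) → ENNReal} (hf : ∀ j, Measurable (f j))
    {p q : ℝ} (hp : 1 < p) (hpq : p ≤ q) :
    ∫⁻ x, (∑' j, MM (f j) x ^ q) ^ (p / q) ≤
      6 ^ n * 2 ^ p * ENNReal.ofReal (p / (p - 1)) * ∫⁻ x, (∑' j, f j x ^ q) ^ (p / q) := by
  have hp0 : 0 < p := by linarith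
  have hq0 : 0 < q := by linarith
  set B : ENNReal := 6 ^ n * 2 ^ p * ENNReal.ofReal (p / (p - 1)) with hB
  have hB0 : B ≠ 0 := by
    refine mul_ne_zero (mul_ne_zero (by positivity) ?_) ?_
    · simp [ENNReal.rpow_eq_zero_iff]
    · have : 0 < p / (p - 1) := div_pos hp0 (by linarith)
      simpa using this
  set G : EuclideanSpace ℝ (Fin n) → ENNReal := fun x => (∑' j, f j x ^ q) ^ (1 / q) with hG
  have hGm : Measurable G :=
    (Measurable.tsum fun j => (hf j).pow_const q).pow_const _
  have hGp : ∀ x, (∑' j, f j x ^ q) ^ (p / q) = G x ^ p := by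
    intro x
    simp only [hG]
    rw [← ENNReal.rpow_mul]
    congr 1
    ring
  have hGq : ∀ x, ∑' j, f j x ^ q = G x ^ q := by
    intro x
    simp only [hG]
    rw [← ENNReal.rpow_mul, one_div_mul_cancel hq0.ne', ENNReal.rpow_one]
  clear_value G
  simp_rw [hGp]
  by_cases hI : ∫⁻ x, G x ^ p = ⊤
  · rw [hI, ENNReal.mul_top hB0]
    exact le_top
  have hfin : ∀ᵐ x, G x < ⊤ := by
    filter_upwards [ae_lt_top (hGm.pow_const p) hI] with x hx
    exact (ENNReal.rpow_lt_top_iff_of_pos hp0).1 hx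
  have hfG : ∀ j x, f j x ≤ G x := by
    intro j x
    have h1 : f j x ^ q ≤ ∑' j, f j x ^ q := ENNReal.le_tsum j
    rw [hGq] at h1
    exact (ENNReal.rpow_le_rpow_iff hq0).1 h1
  set a : ℝ := p / q with ha
  have ha0 : 0 < a := by positivity
  have ha1 : 0 ≤ 1 - a := by
    rw [sub_nonneg, ha, div_le_one hq0]
    exact hpq
  have haq : a * q = p := by rw [ha]; field_simp
  set H : ℤ → EuclideanSpace ℝ (Fin n) → ENNReal :=
    fun j x => G x * (f j x / G x) ^ (1 / a) with hH
  have hHm : ∀ j, Measurable (H j) := fun j => hGm.mul (((hf j).div hGm).pow_const _)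
  have hfac : ∀ j, ∀ᵐ x, f j x ≤ H j x ^ a * G x ^ (1 - a) := by
    intro j
    filter_upwards [hfin] with x hx
    by_cases h0 : G x = 0
    · have := hfG j x
      rw [h0] at this
      exact this.trans zero_le
    · simp only [hH]
      rw [ENNReal.mul_rpow_of_nonneg _ _ ha0.le, ← ENNReal.rpow_mul, one_div_mul_cancel ha0.ne',
        ENNReal.rpow_one, mul_right_comm, ← ENNReal.rpow_add_of_nonneg _ _ ha0.le ha1]
      rw [show a + (1 - a) = 1 by ring, ENNReal.rpow_one, ENNReal.mul_div_cancel h0 hx.ne]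
  have hHsum : ∀ x, ∑' j, H j x ^ p ≤ G x ^ p := by
    intro x
    have e : ∀ j, H j x ^ p = G x ^ p * ((G x ^ q)⁻¹ * f j x ^ q) := by
      intro j
      simp only [hH]
      rw [ENNReal.mul_rpow_of_nonneg _ _ hp0.le, ← ENNReal.rpow_mul,
        show 1 / a * p = q by rw [ha]; field_simp, ENNReal.div_rpow_of_nonneg _ _ hq0.le,
        div_eq_mul_inv, mul_comm (f j x ^ q)]
    simp_rw [e]
    rw [ENNReal.tsum_mul_left, ENNReal.tsum_mul_left, hGq]
    exact mul_le_of_le_one_right' (ENNReal.inv_mul_le_one _)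
  have hpt : ∀ x, (∑' j, MM (f j) x ^ q) ^ a ≤
      (∑' j, MM (H j) x ^ p) ^ a * (MM G x ^ p) ^ (1 - a) := by
    intro x
    have h1 : ∑' j, MM (f j) x ^ q ≤ (∑' j, MM (H j) x ^ p) * MM G x ^ ((1 - a) * q) := by
      rw [← ENNReal.tsum_mul_right]
      refine ENNReal.tsum_le_tsum fun j => ?_
      refine (ENNReal.rpow_le_rpow (MM_holder (hHm j) hGm ha0.le ha1 (by ring) (hfac j) x)
        hq0.le).trans (le_of_eq ?_)
      rw [ENNReal.mul_rpow_of_nonneg _ _ hq0.le, ← ENNReal.rpow_mul, ← ENNReal.rpow_mul, haq]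
    refine (ENNReal.rpow_le_rpow h1 ha0.le).trans (le_of_eq ?_)
    rw [ENNReal.mul_rpow_of_nonneg _ _ ha0.le, ← ENNReal.rpow_mul, ← ENNReal.rpow_mul]
    congr 2
    rw [← haq]
    ring
  calc ∫⁻ x, (∑' j, MM (f j) x ^ q) ^ a
      ≤ ∫⁻ x, (∑' j, MM (H j) x ^ p) ^ a * (MM G x ^ p) ^ (1 - a) := lintegral_mono hpt
    _ ≤ (∫⁻ x, ∑' j, MM (H j) x ^ p) ^ a * (∫⁻ x, MM G x ^ p) ^ (1 - a) :=
        ENNReal.lintegral_mul_norm_pow_le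
          (Measurable.tsum fun j => (measurable_MM (H j)).pow_const p).aemeasurable
          ((measurable_MM G).pow_const p).aemeasurable ha0.le ha1 (by ring)
    _ ≤ (B * ∫⁻ x, G x ^ p) ^ a * (B * ∫⁻ x, G x ^ p) ^ (1 - a) := by
        refine mul_le_mul' (ENNReal.rpow_le_rpow ?_ ha0.le)
          (ENNReal.rpow_le_rpow (strong_type_one hGm hp) ha1)
        rw [lintegral_tsum fun j => ((measurable_MM (H j)).pow_const p).aemeasurable]
        calc ∑' j, ∫⁻ x, MM (H j) x ^ p ≤ ∑' j, B * ∫⁻ x, H j x ^ p :=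
              ENNReal.tsum_le_tsum fun j => strong_type_one (hHm j) hp
          _ = B * ∫⁻ x, ∑' j, H j x ^ p := by
              rw [ENNReal.tsum_mul_left,
                lintegral_tsum fun j => ((hHm j).pow_const p).aemeasurable]
          _ ≤ B * ∫⁻ x, G x ^ p := mul_le_mul_right (lintegral_mono hHsum) _
    _ = B * ∫⁻ x, G x ^ p := by
        rw [← ENNReal.rpow_add_of_nonneg _ _ ha0.le ha1, show a + (1 - a) = 1 by ring,
          ENNReal.rpow_one]

lemma caseB {f : ℤ → EuclideanSpace ℝ (Fin n) → ENNReal} (hf : ∀ j, Measurable (f j))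
    {q s sc : ℝ} (hq : 1 < q) (hs : s.HolderConjugate sc) :
    (∫⁻ x, (∑' j, MM (f j) x ^ q) ^ s) ^ (1 / s) ≤
      6 ^ n * 2 ^ q * ENNReal.ofReal (q / (q - 1)) *
        (6 ^ n * 2 ^ sc * ENNReal.ofReal s) ^ (1 / sc) *
        (∫⁻ x, (∑' j, f j x ^ q) ^ s) ^ (1 / s) := by
  have hs1 : 1 < s := hs.lt
  have hsc1 : 1 < sc := hs.symm.lt
  have hs0 : 0 < s := by linarith
  have hsc0 : 0 < sc := by linarith
  have hss : sc / (sc - 1) = s := hs.symm.conjugate_eq.symm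
  have hss2 : (s - 1) * sc = s := hs.sub_one_mul_conj
  have hsum : 1 / s + 1 / sc = 1 := by
    rw [one_div, one_div]; exact hs.inv_add_inv_eq_one
  set A : ENNReal := 6 ^ n * 2 ^ q * ENNReal.ofReal (q / (q - 1)) with hA
  set D : ENNReal := 6 ^ n * 2 ^ sc * ENNReal.ofReal s with hD
  set F : EuclideanSpace ℝ (Fin n) → ENNReal := fun x => ∑' j, MM (f j) x ^ q with hF
  set G : EuclideanSpace ℝ (Fin n) → ENNReal := fun x => ∑' j, f j x ^ q with hG
  have hFm : Measurable F := Measurable.tsum fun j => (measurable_MM (f j)).pow_const q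
  have hGm : Measurable G := Measurable.tsum fun j => (hf j).pow_const q
  -- dual estimate
  have hdual : ∀ w : EuclideanSpace ℝ (Fin n) → ENNReal, Measurable w →
      ∫⁻ x, F x * w x ≤
        A * ((∫⁻ x, G x ^ s) ^ (1 / s) * (D * ∫⁻ x, w x ^ sc) ^ (1 / sc)) := by
    intro w hw
    have hMw := measurable_MM w
    calc ∫⁻ x, F x * w x = ∑' j, ∫⁻ x, MM (f j) x ^ q * w x := by
          rw [← lintegral_tsum (f := fun j x => MM (f j) x ^ q * w x) fun j =>
            (((measurable_MM (f j)).pow_const q).mul hw).aemeasurable]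
          simp only [hF, ENNReal.tsum_mul_right]
      _ ≤ ∑' j, A * ∫⁻ x, f j x ^ q * MM w x :=
          ENNReal.tsum_le_tsum fun j => strong_type (hf j) hw hq
      _ = A * ∫⁻ x, G x * MM w x := by
          rw [ENNReal.tsum_mul_left, ← lintegral_tsum (f := fun j x => f j x ^ q * MM w x) fun j =>
            (((hf j).pow_const q).mul hMw).aemeasurable]
          simp only [hG, ENNReal.tsum_mul_right]
      _ ≤ A * ((∫⁻ x, G x ^ s) ^ (1 / s) * (∫⁻ x, MM w x ^ sc) ^ (1 / sc)) :=
          mul_le_mul_right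
            (ENNReal.lintegral_mul_le_Lp_mul_Lq volume hs hGm.aemeasurable hMw.aemeasurable) _
      _ ≤ _ := by
          have := strong_type_one hw hsc1
          rw [hss] at this
          gcongr
  let u : ℕ → EuclideanSpace ℝ (Fin n) → ENNReal :=
    fun N => (Metric.ball 0 (N : ℝ)).indicator fun x => min (F x) N
  have hum : ∀ N, Measurable (u N) := fun N =>
    (hFm.min measurable_const).indicator Metric.isOpen_ball.measurableSet
  have huF : ∀ N x, u N x ≤ F x := by
    intro N x
    simp only [u, Set.indicator]
    split_ifs
    · exact min_le_left _ _
    · exact zero_le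
  have humono : Monotone u := by
    intro a b hab x
    have habr : (a : ℝ) ≤ b := by exact_mod_cast hab
    by_cases hx : x ∈ Metric.ball (0 : EuclideanSpace ℝ (Fin n)) (a : ℝ)
    · have hxb := Metric.ball_subset_ball habr hx
      simp only [u, Set.indicator_of_mem hx, Set.indicator_of_mem hxb]
      exact min_le_min le_rfl (by exact_mod_cast hab)
    · simp only [u, Set.indicator_of_notMem hx]
      exact zero_le
  have husup : ∀ x, F x ^ s ≤ ⨆ N, u N x ^ s := by
    intro x
    have h1 : F x ≤ ⨆ N, u N x := by
      refine le_of_forall_lt fun c hc => ?_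
      obtain ⟨N1, hN1⟩ := ENNReal.exists_nat_gt (ne_top_of_lt hc)
      obtain ⟨N2, hN2⟩ := exists_nat_gt ‖x‖
      refine lt_of_lt_of_le ?_ (le_iSup _ (max N1 N2))
      have hx : x ∈ Metric.ball (0 : EuclideanSpace ℝ (Fin n)) ((max N1 N2 : ℕ) : ℝ) := by
        rw [mem_ball_zero_iff]
        exact hN2.trans_le (by exact_mod_cast le_max_right _ _)
      simp only [u, Set.indicator_of_mem hx]
      exact lt_min hc (hN1.trans_le (by exact_mod_cast le_max_left _ _))
    refine (ENNReal.rpow_le_rpow h1 hs0.le).trans (le_of_eq ?_)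
    exact (ENNReal.orderIsoRpow s hs0).map_iSup _
  have hmain : ∀ N, (∫⁻ x, u N x ^ s) ^ (1 / s) ≤
      A * D ^ (1 / sc) * (∫⁻ x, G x ^ s) ^ (1 / s) := by
    intro N
    set I := ∫⁻ x, u N x ^ s with hI
    have hIt : I ≠ ⊤ := by
      have : I ≤ ∫⁻ x in Metric.ball (0 : EuclideanSpace ℝ (Fin n)) (N : ℝ), (N : ENNReal) ^ s := by
        rw [← lintegral_indicator Metric.isOpen_ball.measurableSet]
        refine lintegral_mono fun x => ?_
        simp only [u, Set.indicator]
        split_ifs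
        · exact ENNReal.rpow_le_rpow (min_le_right _ _) hs0.le
        · simp [hs0]
      refine ne_top_of_le_ne_top ?_ this
      rw [setLIntegral_const]
      exact ENNReal.mul_ne_top (ENNReal.rpow_ne_top_of_nonneg hs0.le (by simp)) vb_top
    by_cases hI0 : I = 0
    · rw [hI0, ENNReal.zero_rpow_of_pos (by positivity)]
      exact zero_le
    have h1 := hdual (fun x => u N x ^ (s - 1)) ((hum N).pow_const _)
    have h2 : I ≤ ∫⁻ x, F x * u N x ^ (s - 1) := by
      refine lintegral_mono fun x => ?_
      calc u N x ^ s = u N x ^ (1 : ℝ) * u N x ^ (s - 1) := by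
            rw [← ENNReal.rpow_add_of_nonneg _ _ zero_le_one (by linarith)]
            congr 1
            ring
        _ ≤ F x * u N x ^ (s - 1) := by
            rw [ENNReal.rpow_one]
            exact mul_le_mul_left (huF N x) _
    have h3 : ∫⁻ x, (u N x ^ (s - 1)) ^ sc = I := by
      simp_rw [← ENNReal.rpow_mul, hss2]
      rfl
    rw [h3, ENNReal.mul_rpow_of_nonneg _ _ (by positivity)] at h1
    have h4 := h2.trans h1
    have h5 : I = I ^ (1 / s) * I ^ (1 / sc) := by
      rw [← ENNReal.rpow_add_of_nonneg _ _ (by positivity) (by positivity), hsum,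
        ENNReal.rpow_one]
    have h6 : I ^ (1 / s) * I ^ (1 / sc) ≤
        (A * D ^ (1 / sc) * (∫⁻ x, G x ^ s) ^ (1 / s)) * I ^ (1 / sc) := by
      rw [← h5]
      refine h4.trans (le_of_eq ?_)
      ring
    refine (ENNReal.mul_le_mul_iff_left ?_ ?_).1 h6
    · simp [ENNReal.rpow_eq_zero_iff, hI0, hIt]
    · exact ENNReal.rpow_ne_top_of_nonneg (by positivity) hIt
  rw [one_div, ENNReal.rpow_inv_le_iff hs0, ← one_div]
  refine (lintegral_mono husup).trans ?_
  rw [lintegral_iSup (fun N => (hum N).pow_const s)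
    (fun a b hab x => ENNReal.rpow_le_rpow (humono hab x) hs0.le)]
  refine iSup_le fun N => ?_
  have := hmain N
  rwa [one_div s, ENNReal.rpow_inv_le_iff hs0, ← one_div s] at this

lemma rpow_le_self_of_one_le' {x : ENNReal} (hx : 1 ≤ x) {a : ℝ} (ha : a ≤ 1) : x ^ a ≤ x := by
  conv_rhs => rw [← ENNReal.rpow_one x]
  exact ENNReal.rpow_le_rpow_of_exponent_le hx ha

lemma constA {p : ℝ} (hp : 1 < p) :
    ((6 : ENNReal) ^ n * 2 ^ p * ENNReal.ofReal (p / (p - 1))) ^ (1 / p) ≤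
      ENNReal.ofReal (4 * 36 ^ n * max p (p - 1)⁻¹) := by
  have hp0 : 0 < p := by linarith
  have hp1 : 0 < p - 1 := by linarith
  have h1 : 1 ≤ p / (p - 1) := by rw [le_div_iff₀ hp1]; linarith
  have hK : (1 : ℝ) ≤ 6 ^ n := one_le_pow₀ (by norm_num)
  have e : (6 : ENNReal) ^ n * ENNReal.ofReal (p / (p - 1)) =
      ENNReal.ofReal (6 ^ n * (p / (p - 1))) := by
    rw [ENNReal.ofReal_mul (by positivity), ENNReal.ofReal_pow (by norm_num)]
    simp
  have hbd : p / (p - 1) ≤ 2 * max p (p - 1)⁻¹ := by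
    rcases le_total p 2 with h | h
    · calc p / (p - 1) = p * (p - 1)⁻¹ := div_eq_mul_inv _ _
        _ ≤ 2 * (p - 1)⁻¹ := by gcongr
        _ ≤ _ := by gcongr; exact le_max_right _ _
    · calc p / (p - 1) ≤ 2 * p := by
            rw [div_le_iff₀ hp1]; nlinarith
        _ ≤ _ := by gcongr; exact le_max_left _ _
  rw [mul_right_comm, e, ENNReal.mul_rpow_of_nonneg _ _ (by positivity), ← ENNReal.rpow_mul,
    mul_one_div_cancel hp0.ne', ENNReal.rpow_one]
  refine (mul_le_mul_left (rpow_le_self_of_one_le' ?_ ?_) _).trans ?_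
  · rw [ENNReal.one_le_ofReal]
    exact one_le_mul_of_one_le_of_one_le hK h1
  · rw [div_le_one hp0]; exact hp.le
  · rw [show (2 : ENNReal) = ENNReal.ofReal 2 by simp, ← ENNReal.ofReal_mul (by positivity)]
    apply ENNReal.ofReal_le_ofReal
    have h36 : (6 : ℝ) ^ n ≤ 36 ^ n := by gcongr; norm_num
    calc (6 : ℝ) ^ n * (p / (p - 1)) * 2 ≤ 36 ^ n * (2 * max p (p - 1)⁻¹) * 2 := by gcongr
      _ = _ := by ring

lemma constB {q s sc : ℝ} (hq : 1 < q) (hs : s.HolderConjugate sc) :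
    ((6 : ENNReal) ^ n * 2 ^ q * ENNReal.ofReal (q / (q - 1)) *
        (6 ^ n * 2 ^ sc * ENNReal.ofReal s) ^ (1 / sc)) ^ (1 / q) ≤
      ENNReal.ofReal (4 * 36 ^ n * (s * q)) * ENNReal.ofReal ((q - 1)⁻¹) := by
  have hs1 : 1 < s := hs.lt
  have hsc1 : 1 < sc := hs.symm.lt
  have hs0 : 0 < s := by linarith
  have hsc0 : 0 < sc := by linarith
  have hq0 : 0 < q := by linarith
  have hq1 : 0 < q - 1 := by linarith
  have h1 : 1 ≤ q / (q - 1) := by rw [le_div_iff₀ hq1]; linarith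
  have hK : (1 : ℝ) ≤ 6 ^ n := one_le_pow₀ (by norm_num)
  have e6 : (6 : ENNReal) ^ n = ENNReal.ofReal (6 ^ n) := by
    rw [ENNReal.ofReal_pow (by norm_num)]
    simp
  have e2 : (2 : ENNReal) = ENNReal.ofReal 2 := by simp
  have hD : ((6 : ENNReal) ^ n * 2 ^ sc * ENNReal.ofReal s) ^ (1 / sc) ≤
      ENNReal.ofReal (2 * (6 ^ n * s)) := by
    rw [mul_right_comm, e6, ← ENNReal.ofReal_mul (by positivity),
      ENNReal.mul_rpow_of_nonneg _ _ (by positivity), ← ENNReal.rpow_mul,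
      mul_one_div_cancel hsc0.ne', ENNReal.rpow_one]
    refine (mul_le_mul_left (rpow_le_self_of_one_le' ?_ ?_) _).trans (le_of_eq ?_)
    · rw [ENNReal.one_le_ofReal]
      exact one_le_mul_of_one_le_of_one_le hK hs1.le
    · rw [div_le_one hsc0]; exact hsc1.le
    · rw [e2, ← ENNReal.ofReal_mul (by positivity), mul_comm]
  have hX : (6 : ENNReal) ^ n * 2 ^ q * ENNReal.ofReal (q / (q - 1)) *
        (6 ^ n * 2 ^ sc * ENNReal.ofReal s) ^ (1 / sc) ≤
      ENNReal.ofReal (6 ^ n * (q / (q - 1)) * (2 * (6 ^ n * s))) * 2 ^ q := by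
    refine (mul_le_mul_right hD _).trans (le_of_eq ?_)
    rw [e6, ENNReal.ofReal_mul (p := 6 ^ n * (q / (q - 1))) (by positivity),
      ENNReal.ofReal_mul (p := 6 ^ n) (by positivity)]
    ring
  refine (ENNReal.rpow_le_rpow hX (by positivity)).trans ?_
  rw [ENNReal.mul_rpow_of_nonneg _ _ (by positivity), ← ENNReal.rpow_mul,
    mul_one_div_cancel hq0.ne', ENNReal.rpow_one]
  refine (mul_le_mul_left (rpow_le_self_of_one_le' ?_ ?_) _).trans (le_of_eq ?_)
  · rw [ENNReal.one_le_ofReal]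
    refine one_le_mul_of_one_le_of_one_le (one_le_mul_of_one_le_of_one_le hK h1) ?_
    exact one_le_mul_of_one_le_of_one_le (by norm_num) (one_le_mul_of_one_le_of_one_le hK hs1.le)
  · rw [div_le_one hq0]; exact hq.le
  · rw [e2, ← ENNReal.ofReal_mul (by positivity), ← ENNReal.ofReal_mul (by positivity)]
    congr 1
    rw [show (36 : ℝ) = 6 * 6 by norm_num, mul_pow]
    ring

/-- Fefferman–Stein vector-valued maximal inequality:
`‖‖(Mf_j)_j‖_{ℓ^q}‖_{L^p} ≤ C_n μ(p) μ(q) ‖‖(f_j)_j‖_{ℓ^q}‖_{L^p}`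
for `1 < p < ∞`, `1 < q ≤ ∞`, where `μ(r) = max{r, (r-1)⁻¹}` and `C_n`
depends only on the dimension. -/
theorem fefferman_stein (n : ℕ) :
    ∃ C > (0 : ℝ), ∀ (p : ℝ) (q : ENNReal), 1 < p → 1 < q →
      ∀ f : ℤ → EuclideanSpace ℝ (Fin n) → ℂ, (∀ j, Measurable (f j)) →
        (∫⁻ x, (elq q (fun j => HLmax (f j) x)) ^ p) ^ (1 / p)
          ≤ ENNReal.ofReal (C * max p (p - 1)⁻¹) * max q (q - 1)⁻¹ *
            (∫⁻ x, (elq q (fun j => (‖f j x‖₊ : ENNReal))) ^ p) ^ (1 / p) := by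
  refine ⟨4 * 36 ^ n, by positivity, fun p q hp hq f hf => ?_⟩
  have hp0 : 0 < p := by linarith
  have hp1 : 0 < p - 1 := by linarith
  simp_rw [HLmax_eq]
  set g : ℤ → EuclideanSpace ℝ (Fin n) → ENNReal := fun j x => (‖f j x‖₊ : ENNReal) with hg
  have hgm : ∀ j, Measurable (g j) := fun j => (hf j).nnnorm.coe_nnreal_ennreal
  change (∫⁻ x, (elq q (fun j => MM (g j) x)) ^ p) ^ (1 / p)
          ≤ ENNReal.ofReal (4 * 36 ^ n * max p (p - 1)⁻¹) * max q (q - 1)⁻¹ *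
            (∫⁻ x, (elq q (fun j => g j x)) ^ p) ^ (1 / p)
  have hmax1 : 1 ≤ max q (q - 1)⁻¹ := hq.le.trans (le_max_left _ _)
  by_cases hqt : q = ⊤
  · have e : ∀ a : ℤ → ENNReal, elq q a = ⨆ j, a j := fun a => by rw [elq, if_pos hqt]
    simp_rw [e]
    have hGm : Measurable fun x => ⨆ j, g j x := Measurable.iSup hgm
    calc (∫⁻ x, (⨆ j, MM (g j) x) ^ p) ^ (1 / p)
        ≤ (∫⁻ x, MM (fun x => ⨆ j, g j x) x ^ p) ^ (1 / p) := by
          refine ENNReal.rpow_le_rpow (lintegral_mono fun x => ENNReal.rpow_le_rpow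
            (iSup_le fun j => MM_mono_ae (Filter.Eventually.of_forall fun y => ?_) x) hp0.le)
            (by positivity)
          exact le_iSup (fun j => g j y) j
      _ ≤ (6 ^ n * 2 ^ p * ENNReal.ofReal (p / (p - 1)) * ∫⁻ x, (⨆ j, g j x) ^ p) ^ (1 / p) :=
          ENNReal.rpow_le_rpow (strong_type_one hGm hp) (by positivity)
      _ ≤ _ := by
          rw [ENNReal.mul_rpow_of_nonneg _ _ (by positivity)]
          refine mul_le_mul_left ?_ _
          exact (constA hp).trans (le_mul_of_one_le_right' hmax1)
  · have hqr : 1 < q.toReal := by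
      rw [← ENNReal.toReal_one]
      exact (ENNReal.toReal_lt_toReal ENNReal.one_ne_top hqt).2 hq
    set r := q.toReal with hr
    have hr0 : 0 < r := by linarith
    have e : ∀ a : ℤ → ENNReal, elq q a ^ p = (∑' j, a j ^ r) ^ (p / r) := fun a => by
      rw [elq, if_neg hqt, ← ENNReal.rpow_mul]
      congr 1
      rw [← hr]
      ring
    simp_rw [e]
    rcases le_or_gt p r with hpr | hpr
    · refine (ENNReal.rpow_le_rpow (caseA hgm hp hpr) (by positivity)).trans ?_
      rw [ENNReal.mul_rpow_of_nonneg _ _ (by positivity)]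
      refine mul_le_mul_left ?_ _
      exact (constA hp).trans (le_mul_of_one_le_right' hmax1)
    · have hs1 : 1 < p / r := by rw [lt_div_iff₀ hr0]; linarith
      have hs := Real.HolderConjugate.conjExponent hs1
      have hB := ENNReal.rpow_le_rpow (caseB hgm hqr hs) (by positivity : 0 ≤ 1 / r)
      rw [ENNReal.mul_rpow_of_nonneg _ _ (by positivity), ← ENNReal.rpow_mul, ← ENNReal.rpow_mul,
        show 1 / (p / r) * (1 / r) = 1 / p by field_simp] at hB
      refine hB.trans (mul_le_mul_left ((constB hqr hs).trans ?_) _)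
      rw [div_mul_cancel₀ _ hr0.ne']
      refine mul_le_mul' (ENNReal.ofReal_le_ofReal ?_) ?_
      · gcongr
        exact le_max_left _ _
      · refine le_trans (le_of_eq ?_) (le_max_right _ _)
        rw [ENNReal.ofReal_inv_of_pos (by linarith), ENNReal.ofReal_sub _ zero_le_one,
          ENNReal.ofReal_one, hr, ENNReal.ofReal_toReal hqt]

end
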